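/- Let T, c > 0, let Λ : (0,∞) → (0,∞) be nondecreasing, and let a : ℝ × ℝ × ℝ × [0,T] → ℝ be continuous and positive with a(p,q,x,t) ≤ Λ(K) whenever |p| ≤ K. Let u : ℝ × [0,T] → ℝ be bounded and continuous, with continuous partial derivatives u_t, u_x, u_{xx} on ℝ × (0,T], satisfying u_t = a(u_x,u,x,t)·u_{xx} there, and suppose the initial data lies below the step function of height c: u(x,0) ≤ −c for all x < 0 and u(x,0) ≤ c for all x ∈ ℝ. Then for every x < 0 and every t ∈ (0,T]: u(x,t) ≤ (4c/|x|)·√(Λ(2c/|x|)·t/π) − c. -/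

import Mathlib

open Set Filter Topology

/-- At a local maximum the second derivative is nonpositive. -/
theorem IsLocalMax.hasDerivAt_hasDerivAt_nonpos {f f' : ℝ → ℝ} {f'' x : ℝ}
    (hmax : IsLocalMax f x) (hf : ∀ y, HasDerivAt f (f' y) y) (hf' : HasDerivAt f' f'' x) :
    f'' ≤ 0 := by
  by_contra! hpos
  have hzero : f' x = 0 := hmax.hasDerivAt_eq_zero (hf x)
  have hslope : ∀ᶠ y in 𝓝[>] x, 0 < slope f' x y :=
    ((hasDerivAt_iff_tendsto_slope.mp hf').mono_left (nhdsGT_le_nhdsNE x)).eventually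
      (eventually_gt_nhds hpos)
  have hle : ∀ᶠ y in 𝓝[>] x, f y ≤ f x := hmax.filter_mono nhdsWithin_le_nhds
  obtain ⟨b, hxb, hb⟩ := (nhdsGT_basis x).eventually_iff.mp (hslope.and hle)
  obtain ⟨y, hy⟩ := exists_between hxb
  obtain ⟨z, hz, hfz⟩ := exists_hasDerivAt_eq_slope f f' hy.1
    (fun w _ => (hf w).continuousAt.continuousWithinAt) (fun w _ => hf w)
  have hz_pos := (hb ⟨hz.1, hz.2.trans hy.2⟩).1
  rw [slope_def_field, hzero, sub_zero, hfz] at hz_pos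
  have hfy := (hb hy).2
  have : (f y - f x) / (y - x) ≤ 0 :=
    div_nonpos_of_nonpos_of_nonneg (by linarith) (by linarith [hy.1])
  exact absurd hz_pos (not_lt.mpr (div_nonpos_of_nonpos_of_nonneg this (by linarith [hz.1])))

/-- A function attaining its maximum over `(0, T]` at `t` has nonnegative derivative there. -/
theorem IsMaxOn.hasDerivWithinAt_Ioc_nonneg {f : ℝ → ℝ} {f' T t : ℝ} (ht : t ∈ Ioc 0 T)
    (hmax : IsMaxOn f (Ioc 0 T) t) (hf : HasDerivWithinAt f f' (Ioc 0 T) t) : 0 ≤ f' := by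
  have hcone : t / 2 - t ∈ posTangentConeAt (Ioc 0 T) t :=
    sub_mem_posTangentConeAt_of_segment_subset ((convex_Ioc 0 T).segment_subset ht
      ⟨by linarith [ht.1], by linarith [ht.1, ht.2]⟩)
  have h := hmax.localize.hasFDerivWithinAt_nonpos hf.hasFDerivWithinAt hcone
  simp only [ContinuousLinearMap.toSpanSingleton_apply, smul_eq_mul] at h
  nlinarith [ht.1]

/-- Comparison with a strict supersolution `w` which dominates `u` initially and outside a
bounded set. Strictness is only required with the coefficient frozen at the values of `u`. -/
theorem le_of_strict_supersolution {T : ℝ} {a : ℝ → ℝ → ℝ → ℝ → ℝ}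
    {u ut ux uxx w wt wx wxx : ℝ → ℝ → ℝ}
    (ha_pos : ∀ p q x : ℝ, ∀ t ∈ Icc (0 : ℝ) T, 0 < a p q x t)
    (hu_cont : ContinuousOn (fun z : ℝ × ℝ => u z.1 z.2) (univ ×ˢ Icc 0 T))
    (hut : ∀ x : ℝ, ∀ t ∈ Ioc (0 : ℝ) T,
      HasDerivWithinAt (fun s => u x s) (ut x t) (Ioc 0 T) t)
    (hux : ∀ x : ℝ, ∀ t ∈ Ioc (0 : ℝ) T, HasDerivAt (fun y => u y t) (ux x t) x)
    (huxx : ∀ x : ℝ, ∀ t ∈ Ioc (0 : ℝ) T, HasDerivAt (fun y => ux y t) (uxx x t) x)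
    (hpde : ∀ x : ℝ, ∀ t ∈ Ioc (0 : ℝ) T, ut x t = a (ux x t) (u x t) x t * uxx x t)
    (hw_cont : Continuous (fun z : ℝ × ℝ => w z.1 z.2))
    (hwt : ∀ x : ℝ, ∀ t ∈ Ioc (0 : ℝ) T, HasDerivAt (fun s => w x s) (wt x t) t)
    (hwx : ∀ x : ℝ, ∀ t ∈ Ioc (0 : ℝ) T, HasDerivAt (fun y => w y t) (wx x t) x)
    (hwxx : ∀ x : ℝ, ∀ t ∈ Ioc (0 : ℝ) T, HasDerivAt (fun y => wx y t) (wxx x t) x)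
    (hsuper : ∀ x : ℝ, ∀ t ∈ Ioc (0 : ℝ) T, a (wx x t) (u x t) x t * wxx x t < wt x t)
    (hinit : ∀ x, u x 0 ≤ w x 0)
    (hfar : ∃ R : ℝ, ∀ x : ℝ, R < |x| → ∀ t ∈ Icc (0 : ℝ) T, u x t ≤ w x t) :
    ∀ x : ℝ, ∀ t ∈ Icc (0 : ℝ) T, u x t ≤ w x t := by
  intro x₀ t₀ ht₀
  by_contra! hlt
  obtain ⟨R, hR⟩ := hfar
  have hmem : ∀ x : ℝ, ∀ t ∈ Icc (0 : ℝ) T, w x t < u x t → (x, t) ∈ Icc (-R) R ×ˢ Icc 0 T :=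
    fun x t ht h => ⟨abs_le.mp (not_lt.mp fun hx => h.not_ge (hR x hx t ht)), ht⟩
  obtain ⟨⟨x₁, t₁⟩, h₁, hmax⟩ :=
    (isCompact_Icc.prod isCompact_Icc).exists_isMaxOn ⟨_, hmem x₀ t₀ ht₀ hlt⟩
      ((hu_cont.sub hw_cont.continuousOn).mono (prod_mono_left (subset_univ (Icc (-R) R))))
  have hpos : w x₁ t₁ < u x₁ t₁ := by
    have : u x₀ t₀ - w x₀ t₀ ≤ u x₁ t₁ - w x₁ t₁ := hmax (hmem x₀ t₀ ht₀ hlt)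
    linarith
  have hglobal : ∀ x : ℝ, ∀ t ∈ Icc (0 : ℝ) T, u x t - w x t ≤ u x₁ t₁ - w x₁ t₁ := by
    intro x t ht
    by_cases h : w x t < u x t
    · exact hmax (hmem x t ht h)
    · linarith
  have ht₁ : t₁ ∈ Ioc 0 T :=
    ⟨h₁.2.1.lt_of_ne (by rintro rfl; exact hpos.not_ge (hinit x₁)), h₁.2.2⟩
  have hxmax : IsLocalMax (fun y => u y t₁ - w y t₁) x₁ :=
    Eventually.of_forall fun y => hglobal y t₁ h₁.2
  have hx := hxmax.hasDerivAt_eq_zero ((hux x₁ t₁ ht₁).sub (hwx x₁ t₁ ht₁))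
  have hxx := hxmax.hasDerivAt_hasDerivAt_nonpos
    (fun y => (hux y t₁ ht₁).sub (hwx y t₁ ht₁)) ((huxx x₁ t₁ ht₁).sub (hwxx x₁ t₁ ht₁))
  have ht := IsMaxOn.hasDerivWithinAt_Ioc_nonneg (f := fun s => u x₁ s - w x₁ s) ht₁
    (fun s hs => hglobal x₁ s (Ioc_subset_Icc_self hs))
    ((hut x₁ t₁ ht₁).sub (hwt x₁ t₁ ht₁).hasDerivWithinAt)
  have hs := hsuper x₁ t₁ ht₁
  rw [← sub_eq_zero.mp hx] at hs
  have := mul_le_mul_of_nonneg_left (sub_nonpos.mp hxx) (ha_pos (ux x₁ t₁) (u x₁ t₁) x₁ t₁ h₁.2).le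
  linarith [hpde x₁ t₁ ht₁]

/-- A smooth convex approximation of `max y 0`, equal to it at `s = 0`, which is a strict
supersolution of the heat equation `v_s = L v_yy`. -/
noncomputable def heatRamp (L y s : ℝ) : ℝ := (y + √(y ^ 2 + 4 * L * s)) / 2

/-- The derivative of `heatRamp` in the space variable. -/
noncomputable def heatRampSlope (L y s : ℝ) : ℝ := (1 + y / √(y ^ 2 + 4 * L * s)) / 2

/-- The second derivative of `heatRamp` in the space variable. -/
noncomputable def heatRampCurvature (L y s : ℝ) : ℝ := 2 * L * s / √(y ^ 2 + 4 * L * s) ^ 3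

/-- The derivative of `heatRamp` in the time variable. -/
noncomputable def heatRampSpeed (L y s : ℝ) : ℝ := L / √(y ^ 2 + 4 * L * s)

section heatRamp

variable {L y s : ℝ}

theorem abs_le_sqrt_sq_add (hL : 0 < L) (hs : 0 ≤ s) : |y| ≤ √(y ^ 2 + 4 * L * s) :=
  Real.abs_le_sqrt (by nlinarith [mul_nonneg hL.le hs])

theorem heatRamp_nonneg (hL : 0 < L) (hs : 0 ≤ s) : 0 ≤ heatRamp L y s := by
  have := neg_le_of_abs_le (abs_le_sqrt_sq_add (y := y) hL hs)
  unfold heatRamp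
  linarith

theorem le_heatRamp (hL : 0 < L) (hs : 0 ≤ s) : y ≤ heatRamp L y s := by
  have := le_of_abs_le (abs_le_sqrt_sq_add (y := y) hL hs)
  unfold heatRamp
  linarith

theorem sq_add_pos (hL : 0 < L) (hs : 0 < s) : 0 < y ^ 2 + 4 * L * s := by positivity

theorem heatRampSlope_mem_Icc (hL : 0 < L) (hs : 0 < s) : heatRampSlope L y s ∈ Icc 0 1 := by
  have hpos := Real.sqrt_pos.mpr (sq_add_pos (y := y) hL hs)
  have h := abs_le.mp (abs_le_sqrt_sq_add (y := y) hL hs.le)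
  have h₁ : y / √(y ^ 2 + 4 * L * s) ≤ 1 := (div_le_one hpos).mpr h.2
  have h₂ : -1 ≤ y / √(y ^ 2 + 4 * L * s) := by rw [le_div_iff₀ hpos]; linarith
  unfold heatRampSlope
  constructor <;> linarith

theorem heatRampCurvature_nonneg (hL : 0 < L) (hs : 0 < s) : 0 ≤ heatRampCurvature L y s := by
  unfold heatRampCurvature
  positivity

theorem hasDerivAt_heatRamp (hL : 0 < L) (hs : 0 < s) :
    HasDerivAt (fun y => heatRamp L y s) (heatRampSlope L y s) y := by
  have hne := (sq_add_pos (y := y) hL hs).ne'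
  have h := ((hasDerivAt_id y).add
    ((((hasDerivAt_id y).pow 2).add_const (4 * L * s)).sqrt hne)).div_const 2
  refine h.congr_deriv ?_
  have := Real.sqrt_ne_zero'.mpr (sq_add_pos (y := y) hL hs)
  simp only [id, heatRampSlope, Pi.pow_apply, Nat.cast_ofNat, Nat.add_one_sub_one, pow_one]
  field_simp

theorem hasDerivAt_heatRampSlope (hL : 0 < L) (hs : 0 < s) :
    HasDerivAt (fun y => heatRampSlope L y s) (heatRampCurvature L y s) y := by
  have hpos := sq_add_pos (y := y) hL hs
  have hne := Real.sqrt_ne_zero'.mpr hpos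
  have h := (((hasDerivAt_id y).div
    ((((hasDerivAt_id y).pow 2).add_const (4 * L * s)).sqrt hpos.ne') hne).const_add 1).div_const 2
  refine h.congr_deriv ?_
  have hsq := Real.sq_sqrt hpos.le
  simp only [id, heatRampCurvature, Pi.pow_apply, Nat.cast_ofNat, Nat.add_one_sub_one, pow_one]
  generalize √(y ^ 2 + 4 * L * s) = S at hne hsq ⊢
  field_simp
  linear_combination hsq

theorem hasDerivAt_heatRamp_time (hL : 0 < L) (hs : 0 < s) :
    HasDerivAt (fun s => heatRamp L y s) (heatRampSpeed L y s) s := by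
  have hpos := sq_add_pos (y := y) hL hs
  have h := (((((hasDerivAt_id s).const_mul (4 * L)).const_add (y ^ 2)).sqrt
    hpos.ne').const_add y).div_const 2
  refine h.congr_deriv ?_
  have := Real.sqrt_ne_zero'.mpr hpos
  simp only [id, heatRampSpeed]
  field_simp
  norm_num

theorem mul_heatRampCurvature_lt (hL : 0 < L) (hs : 0 < s) :
    L * heatRampCurvature L y s < heatRampSpeed L y s := by
  have hpos := sq_add_pos (y := y) hL hs
  have hS := Real.sqrt_pos.mpr hpos
  have hsq := Real.sq_sqrt hpos.le
  unfold heatRampCurvature heatRampSpeed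
  generalize √(y ^ 2 + 4 * L * s) = S at hS hsq ⊢
  rw [← mul_div_assoc, div_lt_div_iff₀ (pow_pos hS 3) hS]
  have : 2 * L * s < S ^ 2 := by nlinarith [sq_nonneg y, mul_pos hL hs]
  nlinarith [mul_lt_mul_of_pos_left this (mul_pos hL hS)]

end heatRamp

/-- Displacement estimate for a bounded entire solution whose
initial data lies below the step function of height `c`. -/
theorem displacement_estimate_step_function
    (T c : ℝ) (hT : 0 < T) (hc : 0 < c)
    (Λ : ℝ → ℝ) (hΛ_pos : ∀ s : ℝ, 0 < s → 0 < Λ s)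
    (hΛ_mono : ∀ s s' : ℝ, 0 < s → s ≤ s' → Λ s ≤ Λ s')
    (a : ℝ → ℝ → ℝ → ℝ → ℝ)
    (ha_cont : ContinuousOn (fun z : ℝ × ℝ × ℝ × ℝ => a z.1 z.2.1 z.2.2.1 z.2.2.2)
      (Set.univ ×ˢ Set.univ ×ˢ Set.univ ×ˢ Set.Icc 0 T))
    (ha_pos : ∀ p q x : ℝ, ∀ t ∈ Set.Icc (0:ℝ) T, 0 < a p q x t)
    (ha_ub : ∀ K : ℝ, 0 < K → ∀ p q x : ℝ, ∀ t ∈ Set.Icc (0:ℝ) T,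
      |p| ≤ K → a p q x t ≤ Λ K)
    (u ut ux uxx : ℝ → ℝ → ℝ)
    (hu_bdd : ∃ B : ℝ, ∀ x : ℝ, ∀ t ∈ Set.Icc (0:ℝ) T, |u x t| ≤ B)
    (hu_cont : ContinuousOn (fun z : ℝ × ℝ => u z.1 z.2) (Set.univ ×ˢ Set.Icc 0 T))
    (hut : ∀ x : ℝ, ∀ t ∈ Set.Ioc (0:ℝ) T,
      HasDerivWithinAt (fun s => u x s) (ut x t) (Set.Ioc 0 T) t)
    (hux : ∀ x : ℝ, ∀ t ∈ Set.Ioc (0:ℝ) T, HasDerivAt (fun y => u y t) (ux x t) x)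
    (huxx : ∀ x : ℝ, ∀ t ∈ Set.Ioc (0:ℝ) T, HasDerivAt (fun y => ux y t) (uxx x t) x)
    (hut_cont : ContinuousOn (fun z : ℝ × ℝ => ut z.1 z.2) (Set.univ ×ˢ Set.Ioc 0 T))
    (hux_cont : ContinuousOn (fun z : ℝ × ℝ => ux z.1 z.2) (Set.univ ×ˢ Set.Ioc 0 T))
    (huxx_cont : ContinuousOn (fun z : ℝ × ℝ => uxx z.1 z.2) (Set.univ ×ˢ Set.Ioc 0 T))
    (hpde : ∀ x : ℝ, ∀ t ∈ Set.Ioc (0:ℝ) T,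
      ut x t = a (ux x t) (u x t) x t * uxx x t)
    (hinit_neg : ∀ x : ℝ, x < 0 → u x 0 ≤ -c)
    (hinit : ∀ x : ℝ, u x 0 ≤ c) :
    ∀ x : ℝ, x < 0 → ∀ t ∈ Set.Ioc (0:ℝ) T,
      u x t ≤ (4 * c / |x|) * Real.sqrt (Λ (2 * c / |x|) * t / Real.pi) - c := by
  intro x₀ hx₀ t₀ ht₀
  have hδ : 0 < |x₀| := abs_pos.mpr hx₀.ne
  have hδ' : |x₀| = -x₀ := abs_of_neg hx₀
  set K := 2 * c / |x₀| with hK_def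
  have hK : 0 < K := by positivity
  have hKδ : K * |x₀| = 2 * c := by rw [hK_def]; field_simp
  set L := Λ K
  have hL : 0 < L := hΛ_pos K hK
  obtain ⟨B, hB⟩ := hu_bdd
  have hbarrier : ∀ ε : ℝ, 0 < ε → ε ≤ K →
      u x₀ t₀ ≤ -c + K * √(L * t₀) + ε * √(L * (t₀ + 1)) := by
    intro ε hε hεK
    have hle := le_of_strict_supersolution ha_pos hu_cont hut hux huxx hpde
      (w := fun x t => -c + K * heatRamp L (x - x₀) t + ε * heatRamp L (x₀ - x) (t + 1))
      (wt := fun x t => K * heatRampSpeed L (x - x₀) t + ε * heatRampSpeed L (x₀ - x) (t + 1))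
      (wx := fun x t => K * heatRampSlope L (x - x₀) t - ε * heatRampSlope L (x₀ - x) (t + 1))
      (wxx := fun x t =>
        K * heatRampCurvature L (x - x₀) t + ε * heatRampCurvature L (x₀ - x) (t + 1))
      (by unfold heatRamp; fun_prop)
      (fun x t ht => ((((hasDerivAt_heatRamp_time hL ht.1).const_mul K).const_add (-c)).add
        (((hasDerivAt_heatRamp_time hL (by linarith [ht.1])).comp_add_const t 1).const_mul ε)))
      (fun x t ht => by
        have ht' : 0 < t + 1 := by linarith [ht.1]
        have h := ((((hasDerivAt_heatRamp hL ht.1).comp_sub_const x x₀).const_mul K).const_add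
          (-c)).add (((hasDerivAt_heatRamp hL ht').comp_const_sub x₀ x).const_mul ε)
        exact h.congr_deriv (by ring))
      (fun x t ht => by
        have ht' : 0 < t + 1 := by linarith [ht.1]
        have h := (((hasDerivAt_heatRampSlope hL ht.1).comp_sub_const x x₀).const_mul K).sub
          (((hasDerivAt_heatRampSlope hL ht').comp_const_sub x₀ x).const_mul ε)
        exact h.congr_deriv (by ring))
      ?_ ?_ ?_ x₀ t₀ (Ioc_subset_Icc_self ht₀)
    · have hsqrt : ∀ s : ℝ, √(0 ^ 2 + 4 * L * s) = 2 * √(L * s) := fun s => by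
        rw [show (0 : ℝ) ^ 2 + 4 * L * s = 2 ^ 2 * (L * s) by ring,
          Real.sqrt_mul (by norm_num), Real.sqrt_sq (by norm_num)]
      simp only [heatRamp, sub_self, hsqrt] at hle
      linarith
    · intro x t ht
      have ht' : 0 < t + 1 := by linarith [ht.1]
      obtain ⟨h₁, h₁'⟩ := heatRampSlope_mem_Icc (y := x - x₀) hL ht.1
      obtain ⟨h₂, h₂'⟩ := heatRampSlope_mem_Icc (y := x₀ - x) hL ht'
      have hslope : |K * heatRampSlope L (x - x₀) t - ε * heatRampSlope L (x₀ - x) (t + 1)|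
          ≤ K := abs_le.mpr ⟨by nlinarith, by nlinarith⟩
      have ha := ha_ub K hK _ (u x t) x t (Ioc_subset_Icc_self ht) hslope
      have hcurv : 0 ≤ K * heatRampCurvature L (x - x₀) t
          + ε * heatRampCurvature L (x₀ - x) (t + 1) :=
        add_nonneg (mul_nonneg hK.le (heatRampCurvature_nonneg hL ht.1))
          (mul_nonneg hε.le (heatRampCurvature_nonneg hL ht'))
      have h₃ := mul_lt_mul_of_pos_left (mul_heatRampCurvature_lt (y := x - x₀) hL ht.1) hK
      have h₄ := mul_lt_mul_of_pos_left (mul_heatRampCurvature_lt (y := x₀ - x) hL ht') hε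
      linarith [mul_le_mul_of_nonneg_right ha hcurv]
    · intro x
      have h₁ := mul_nonneg hK.le (heatRamp_nonneg (y := x - x₀) hL le_rfl)
      have h₂ := mul_nonneg hε.le (heatRamp_nonneg (y := x₀ - x) (s := 0 + 1) hL (by norm_num))
      rcases lt_or_ge x 0 with hx | hx
      · linarith [hinit_neg x hx]
      · have h₃ := mul_le_mul_of_nonneg_left (le_heatRamp (y := x - x₀) hL le_rfl) hK.le
        nlinarith [hinit x, mul_nonneg hK.le hx]
    · refine ⟨|x₀| + (B + c) / ε, fun x hx t ht => ?_⟩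
      have h₁ := mul_nonneg hK.le (heatRamp_nonneg (y := x - x₀) hL ht.1)
      have h₂ := mul_nonneg hε.le
        (heatRamp_nonneg (y := x₀ - x) (s := t + 1) hL (by linarith [ht.1]))
      have hfar : B + c < ε * |x - x₀| := by
        rw [← div_lt_iff₀' hε]
        linarith [abs_sub_abs_le_abs_sub x x₀]
      have hu := le_of_abs_le (hB x t ht)
      rcases le_total 0 (x - x₀) with hx' | hx'
      · rw [abs_of_nonneg hx'] at hfar
        have h₃ := mul_le_mul_of_nonneg_left (le_heatRamp (y := x - x₀) hL ht.1) hK.le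
        linarith [mul_le_mul_of_nonneg_right hεK hx']
      · rw [abs_of_nonpos hx', neg_sub] at hfar
        have h₃ := mul_le_mul_of_nonneg_left
          (le_heatRamp (y := x₀ - x) (s := t + 1) hL (by linarith [ht.1])) hε.le
        linarith
  have hlim : u x₀ t₀ ≤ -c + K * √(L * t₀) := by
    have hcont : Continuous fun ε : ℝ => -c + K * √(L * t₀) + ε * √(L * (t₀ + 1)) := by fun_prop
    have htend := (hcont.tendsto 0).mono_left (nhdsWithin_le_nhds (s := Ioi 0))
    rw [zero_mul, add_zero] at htend
    refine ge_of_tendsto htend ?_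
    filter_upwards [Ioc_mem_nhdsGT hK] with ε hε using hbarrier ε hε.1 hε.2
  have hsqrt : √(L * t₀) ≤ 2 * √(L * t₀ / Real.pi) := by
    rw [show (2 : ℝ) = √(2 ^ 2) by simp, ← Real.sqrt_mul (by norm_num)]
    refine Real.sqrt_le_sqrt ?_
    rw [← mul_div_assoc, le_div_iff₀ Real.pi_pos]
    nlinarith [Real.pi_le_four, mul_pos hL ht₀.1]
  have hcoef : 4 * c / |x₀| = 2 * K := by rw [hK_def]; ring
  rw [hcoef]
  linarith [mul_le_mul_of_nonneg_left hsqrt hK.le]
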